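/- Let d ≥ 1 be an integer, m ∈ ℝ, and let J : ℝ^d → ℝ be continuous. Let S = {α ∈ ℝ^d : 0 ≤ α₁ ≤ … ≤ α_d ≤ 1/4 and (4/π)·Σ_{i=1}^{d}(−1)^{i+1}·cos(2πα_i) = m}, and for each k ∈ ℕ let S_k = {α ∈ ℝ^d : 0 ≤ α₁ ≤ … ≤ α_d ≤ 1/4 and m − Δm_k ≤ (4/π)·Σ_{i=1}^{d}(−1)^{i+1}·Γ_k(α_i) ≤ m + Δm_k}. If S is nonempty, then the optimal values of the relaxed problems converge to the optimal value of the exact problem: lim_{k→∞} inf_{α ∈ S_k} J(α) = inf_{α ∈ S} J(α). -/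

import Mathlib

open Real

/-- The degree-`k` Taylor polynomial of `f(α) = cos(2πα)` about the expansion point `α₀`,
`Γ_k(α) = Σ_{n=0}^{k} f⁽ⁿ⁾(α₀)·(α − α₀)^n/n!`, evaluated at `α`. -/
noncomputable def taylorCos (k : ℕ) (α₀ α : ℝ) : ℝ :=
  ∑ n ∈ Finset.range (k + 1),
    iteratedDeriv n (fun t : ℝ => Real.cos (2 * π * t)) α₀ / n.factorial * (α - α₀) ^ n

/-- The modulation-index error bound Δm_k = (4d/π)·(2π)^{k+1}·(1/8)^{k+1}/(k+1)!. -/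
noncomputable def deltaM (d k : ℕ) : ℝ :=
  (4 * (d : ℝ) / π) * (2 * π) ^ (k + 1) * (1 / 8 : ℝ) ^ (k + 1) / (k + 1).factorial

/-- The exact OPP feasible set S: vectors α ∈ ℝ^d with 0 ≤ α₁ ≤ … ≤ α_d ≤ 1/4 satisfying
(4/π)·Σ_{i=1}^d (−1)^{i+1}·cos(2πα_i) = m (0-based indexing turns (−1)^{i+1} into (−1)^i). -/
def exactSet (d : ℕ) (m : ℝ) : Set (Fin d → ℝ) :=
  {α | Monotone α ∧ (∀ i, 0 ≤ α i) ∧ (∀ i, α i ≤ 1 / 4) ∧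
    (4 / π) * ∑ i : Fin d, (-1 : ℝ) ^ (i : ℕ) * Real.cos (2 * π * α i) = m}

/-- The level-k Taylor relaxed feasible set S_k: the equality constraint is replaced by
m − Δm_k ≤ (4/π)·Σ_{i=1}^d (−1)^{i+1}·Γ_k(α_i) ≤ m + Δm_k. -/
noncomputable def relaxedSet (d : ℕ) (m : ℝ) (k : ℕ) : Set (Fin d → ℝ) :=
  {α | Monotone α ∧ (∀ i, 0 ≤ α i) ∧ (∀ i, α i ≤ 1 / 4) ∧
    m - deltaM d k ≤ (4 / π) * ∑ i : Fin d, (-1 : ℝ) ^ (i : ℕ) * taylorCos k (1 / 8) (α i) ∧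
    (4 / π) * ∑ i : Fin d, (-1 : ℝ) ^ (i : ℕ) * taylorCos k (1 / 8) (α i) ≤ m + deltaM d k}

/-!
By Lagrange's remainder estimate, `Γ_k` is so close to `cos (2π·)` on `[0, 1/4]` that the two
modulation indices differ by at most `Δm_k`. So `S ⊆ S_k`, and on `S_k` the exact modulation index
is within `2 Δm_k → 0` of `m`. If `J < c < inf_S J` at points of `S_k` for arbitrarily large `k`,
then by compactness these points would accumulate at a point of `S` where, by lower
semicontinuity, `J ≤ c`, which is absurd.
-/

open Filter Topology

section Infima

variable {ι X R : Type*} [TopologicalSpace X] [ConditionallyCompleteLinearOrder R]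
  {l : Filter ι} {K S : Set X} {T : ι → Set X} {J : X → R}

-- The last hypothesis says that the Kuratowski upper limit of `T` inside `K` is contained in `S`.
theorem eventually_forall_mem_lt_of_lt_sInf_image (hK : IsCompact K)
    (hJ : LowerSemicontinuousOn J K) (hSK : S ⊆ K) (hTK : ∀ᶠ i in l, T i ⊆ K)
    (hlim : ∀ x ∈ K \ S, ∀ᶠ p in l ×ˢ 𝓝 x, p.2 ∉ T p.1) {c : R} (hc : c < sInf (J '' S)) :
    ∀ᶠ i in l, ∀ x ∈ T i, c < J x := by
  have : Nonempty R := ⟨c⟩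
  have hbdd : BddBelow (J '' S) := (hJ.bddBelow_of_isCompact hK).mono (Set.image_mono hSK)
  have hlocal : ∀ x ∈ K, ∀ᶠ p in l ×ˢ 𝓝 x, p.2 ∈ K → p.2 ∈ T p.1 → c < J p.2 := by
    intro x hxK
    by_cases hxS : x ∈ S
    · have hcx : c < J x := hc.trans_le (csInf_le hbdd (Set.mem_image_of_mem J hxS))
      filter_upwards [(eventually_nhdsWithin_iff.1 (hJ x hxK c hcx)).prod_inr l] with p hp hpK _
      exact hp hpK
    · filter_upwards [hlim x ⟨hxK, hxS⟩] with p hp _ hpT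
      exact absurd hpT hp
  have hglobal : ∀ᶠ i in l, ∀ x ∈ K, x ∈ T i → c < J x :=
    (Eventually.curry (hK.mem_prod_nhdsSet_of_forall hlocal)).mono fun i hi x hxK =>
      hi.self_of_nhdsSet x hxK hxK
  filter_upwards [hglobal, hTK] with i hi hiK x hx
  exact hi x (hiK hx) hx

variable [DenselyOrdered R] [TopologicalSpace R] [OrderTopology R]

theorem tendsto_sInf_image_of_upperLimit_subset (hK : IsCompact K)
    (hJ : LowerSemicontinuousOn J K) (hS : S.Nonempty) (hSK : S ⊆ K) (hST : ∀ᶠ i in l, S ⊆ T i)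
    (hTK : ∀ᶠ i in l, T i ⊆ K) (hlim : ∀ x ∈ K \ S, ∀ᶠ p in l ×ˢ 𝓝 x, p.2 ∉ T p.1) :
    Tendsto (fun i => sInf (J '' T i)) l (𝓝 (sInf (J '' S))) := by
  refine tendsto_order.2 ⟨fun a ha => ?_, fun a ha => ?_⟩
  · obtain ⟨c, hac, hc⟩ := exists_between ha
    filter_upwards [hST, eventually_forall_mem_lt_of_lt_sInf_image hK hJ hSK hTK hlim hc]
      with i hiS hi
    exact hac.trans_le (le_csInf ((hS.mono hiS).image J)
      (Set.forall_mem_image.2 fun x hx => (hi x hx).le))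
  · filter_upwards [hST, hTK] with i hiS hiK
    have : Nonempty R := ⟨a⟩
    have hbdd : BddBelow (J '' T i) := (hJ.bddBelow_of_isCompact hK).mono (Set.image_mono hiK)
    exact (csInf_le_csInf hbdd (hS.image J) (Set.image_mono hiS)).trans_lt ha

theorem tendsto_sInf_image_of_subset_dist_le {E : Type*} [MetricSpace E] {g : X → E} {b : E}
    {ε : ι → ℝ} (hK : IsCompact K) (hg : ContinuousOn g K) (hJ : LowerSemicontinuousOn J K)
    (hε : Tendsto ε l (𝓝 0)) (hne : (K ∩ g ⁻¹' {b}).Nonempty)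
    (hsub : ∀ᶠ i in l, K ∩ g ⁻¹' {b} ⊆ T i)
    (hT : ∀ᶠ i in l, T i ⊆ {x ∈ K | dist (g x) b ≤ ε i}) :
    Tendsto (fun i => sInf (J '' T i)) l (𝓝 (sInf (J '' (K ∩ g ⁻¹' {b})))) := by
  have hTK : ∀ᶠ i in l, T i ⊆ K := hT.mono fun i hi x hx => (hi hx).1
  refine tendsto_sInf_image_of_upperLimit_subset hK hJ hne Set.inter_subset_left hsub hTK ?_
  rintro x ⟨hxK, hx⟩
  have hpos : 0 < dist (g x) b := dist_pos.2 fun h => hx ⟨hxK, h⟩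
  obtain ⟨r, hr, hrx⟩ := exists_between hpos
  have hfar : ∀ᶠ y in 𝓝 x, y ∈ K → r < dist (g y) b := eventually_nhdsWithin_iff.1 <|
    ((hg x hxK).dist continuousWithinAt_const).eventually_const_lt hrx
  filter_upwards [(hT.and (hε.eventually_lt_const hr)).prod_mk hfar] with p ⟨⟨hTp, hεp⟩, hgp⟩ hp
  exact absurd (hgp (hTp hp).1) ((hTp hp).2.trans hεp.le).not_gt

end Infima

section Taylor

theorem abs_sub_taylor_sum_le {f : ℝ → ℝ} {k : ℕ} {C x₀ x : ℝ} (hf : ContDiff ℝ (k + 1) f)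
    (hC : ∀ y ∈ Set.uIoo x₀ x, |iteratedDeriv (k + 1) f y| ≤ C) :
    |f x - ∑ n ∈ Finset.range (k + 1), iteratedDeriv n f x₀ / n.factorial * (x - x₀) ^ n| ≤
      C * |x - x₀| ^ (k + 1) / (k + 1).factorial := by
  rcases eq_or_ne x₀ x with rfl | hx
  · simp [Finset.sum_range_succ']
  have htaylor : taylorWithinEval f k (Set.uIcc x₀ x) x₀ x =
      ∑ n ∈ Finset.range (k + 1), iteratedDeriv n f x₀ / n.factorial * (x - x₀) ^ n := by
    rw [taylor_within_apply]
    refine Finset.sum_congr rfl fun n hn => ?_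
    have hfn : ContDiff ℝ n f := hf.of_le (by exact_mod_cast (Finset.mem_range.1 hn).le)
    rw [iteratedDerivWithin_eq_iteratedDeriv (uniqueDiffOn_uIcc hx) hfn.contDiffAt
      Set.left_mem_uIcc, smul_eq_mul]
    ring
  obtain ⟨y, hy, hrem⟩ := taylor_mean_remainder_lagrange_iteratedDeriv hx hf.contDiffOn
  rw [← htaylor, hrem, abs_div, abs_mul, abs_pow, Nat.abs_cast]
  gcongr
  exact hC y hy

theorem abs_iteratedDeriv_cos_const_mul_le (n : ℕ) (c x : ℝ) :
    |iteratedDeriv n (fun t => Real.cos (c * t)) x| ≤ |c| ^ n := by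
  rw [iteratedDeriv_comp_const_mul Real.contDiff_cos, abs_mul, abs_pow]
  exact mul_le_of_le_one_right (by positivity) (Real.abs_iteratedDeriv_cos_le_one n _)

theorem abs_cos_sub_taylorCos_le (k : ℕ) (x₀ x : ℝ) :
    |Real.cos (2 * π * x) - taylorCos k x₀ x| ≤
      (2 * π * |x - x₀|) ^ (k + 1) / (k + 1).factorial := by
  have hderiv (y : ℝ) :
      |iteratedDeriv (k + 1) (fun t => Real.cos (2 * π * t)) y| ≤ (2 * π) ^ (k + 1) := by
    simpa only [abs_of_pos two_pi_pos] using
      abs_iteratedDeriv_cos_const_mul_le (k + 1) (2 * π) y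
  rw [mul_pow, taylorCos]
  exact abs_sub_taylor_sum_le (f := fun t => Real.cos (2 * π * t)) (by fun_prop) fun y _ => hderiv y

theorem abs_cos_sub_taylorCos_le_of_mem_Icc (k : ℕ) {x : ℝ} (hx : x ∈ Set.Icc (0 : ℝ) (1 / 4)) :
    |Real.cos (2 * π * x) - taylorCos k (1 / 8) x| ≤
      (2 * π * (1 / 8)) ^ (k + 1) / (k + 1).factorial := by
  have hdist : |x - 1 / 8| ≤ 1 / 8 := abs_le.2 ⟨by linarith [hx.1], by linarith [hx.2]⟩
  refine (abs_cos_sub_taylorCos_le k (1 / 8) x).trans ?_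
  gcongr

end Taylor

section ModulationIndex

variable {d : ℕ}

/-- The modulation index `(4/π)·Σ (−1)^i·f(α_i)` of the switching angles `α`. The exact problem
takes `f = cos (2π·)` and its level-`k` relaxation takes `f = Γ_k`. -/
noncomputable def modulationIndex (f : ℝ → ℝ) (α : Fin d → ℝ) : ℝ :=
  (4 / π) * ∑ i : Fin d, (-1 : ℝ) ^ (i : ℕ) * f (α i)

theorem continuous_modulationIndex {f : ℝ → ℝ} (hf : Continuous f) :
    Continuous (modulationIndex (d := d) f) := by
  unfold modulationIndex
  fun_prop

theorem abs_modulationIndex_sub_le {f g : ℝ → ℝ} {α : Fin d → ℝ} {C : ℝ}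
    (h : ∀ i, |f (α i) - g (α i)| ≤ C) :
    |modulationIndex f α - modulationIndex g α| ≤ 4 * d / π * C := by
  have hterm (i : Fin d) : |(-1 : ℝ) ^ (i : ℕ) * f (α i) - (-1 : ℝ) ^ (i : ℕ) * g (α i)| ≤ C := by
    simpa only [← mul_sub, abs_mul, abs_neg_one_pow, one_mul] using h i
  calc |modulationIndex f α - modulationIndex g α|
      = 4 / π * |∑ i : Fin d, ((-1 : ℝ) ^ (i : ℕ) * f (α i) - (-1 : ℝ) ^ (i : ℕ) * g (α i))| := by
        rw [modulationIndex, modulationIndex, ← mul_sub, ← Finset.sum_sub_distrib, abs_mul,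
          abs_of_pos (by positivity : 0 < 4 / π)]
    _ ≤ 4 / π * ∑ _i : Fin d, C := by
        gcongr
        exact (Finset.abs_sum_le_sum_abs _ _).trans (Finset.sum_le_sum fun i _ => hterm i)
    _ = 4 * d / π * C := by
        rw [Finset.sum_const, Finset.card_univ, Fintype.card_fin, nsmul_eq_mul]
        ring

end ModulationIndex

section FeasibleSets

/-- The polytope `0 ≤ α₁ ≤ … ≤ α_d ≤ 1/4` of admissible switching angles, on which both the exact
and the relaxed problem impose their modulation constraint. -/
def switchingPolytope (d : ℕ) : Set (Fin d → ℝ) :=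
  {α | Monotone α ∧ ∀ i, α i ∈ Set.Icc (0 : ℝ) (1 / 4)}

theorem isCompact_switchingPolytope (d : ℕ) : IsCompact (switchingPolytope d) := by
  have hbox : IsCompact (Set.univ.pi fun _ : Fin d => Set.Icc (0 : ℝ) (1 / 4)) :=
    isCompact_univ_pi fun _ => isCompact_Icc
  have hpolytope : switchingPolytope d =
      {α | Monotone α} ∩ Set.univ.pi fun _ => Set.Icc (0 : ℝ) (1 / 4) := by
    ext α
    simp only [switchingPolytope, Set.mem_ofPred_eq, Set.mem_inter_iff, Set.mem_univ_pi]
  exact hpolytope ▸ hbox.inter_left isClosed_monotone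

theorem exactSet_eq_inter_preimage (d : ℕ) (m : ℝ) :
    exactSet d m =
      switchingPolytope d ∩ modulationIndex (fun t => Real.cos (2 * π * t)) ⁻¹' {m} := by
  ext α
  simp only [exactSet, switchingPolytope, modulationIndex, Set.mem_inter_iff, Set.mem_ofPred_eq,
    Set.mem_preimage, Set.mem_singleton_iff, Set.mem_Icc, forall_and, and_assoc]

theorem relaxedSet_eq_sep_dist_le (d : ℕ) (m : ℝ) (k : ℕ) :
    relaxedSet d m k =
      {α ∈ switchingPolytope d |
        dist (modulationIndex (taylorCos k (1 / 8)) α) m ≤ deltaM d k} := by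
  ext α
  simp only [relaxedSet, switchingPolytope, modulationIndex, Set.mem_ofPred_eq, Set.mem_Icc,
    forall_and, and_assoc, Real.dist_eq, abs_le, neg_le_sub_iff_le_add, sub_le_iff_le_add,
    add_comm m]

theorem deltaM_eq (d k : ℕ) :
    deltaM d k = 4 * d / π * ((2 * π * (1 / 8)) ^ (k + 1) / (k + 1).factorial) := by
  rw [deltaM, mul_pow (2 * π) (1 / 8)]
  ring

theorem tendsto_deltaM_atTop (d : ℕ) : Tendsto (deltaM d) atTop (𝓝 0) := by
  have h := ((FloorSemiring.tendsto_pow_div_factorial_atTop (2 * π * (1 / 8))).comp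
    (tendsto_add_atTop_nat 1)).const_mul (4 * d / π)
  rw [mul_zero] at h
  exact h.congr fun k => (deltaM_eq d k).symm

theorem dist_modulationIndex_cos_taylorCos_le {d : ℕ} (k : ℕ) {α : Fin d → ℝ}
    (hα : α ∈ switchingPolytope d) :
    dist (modulationIndex (fun t => Real.cos (2 * π * t)) α)
      (modulationIndex (taylorCos k (1 / 8)) α) ≤ deltaM d k := by
  rw [Real.dist_eq, deltaM_eq]
  exact abs_modulationIndex_sub_le fun i => abs_cos_sub_taylorCos_le_of_mem_Icc k (hα.2 i)

theorem exactSet_subset_relaxedSet (d : ℕ) (m : ℝ) (k : ℕ) : exactSet d m ⊆ relaxedSet d m k := by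
  rw [exactSet_eq_inter_preimage, relaxedSet_eq_sep_dist_le]
  rintro α ⟨hα, rfl⟩
  exact ⟨hα, (dist_comm _ _).trans_le (dist_modulationIndex_cos_taylorCos_le k hα)⟩

theorem relaxedSet_subset_dist_le (d : ℕ) (m : ℝ) (k : ℕ) :
    relaxedSet d m k ⊆ {α ∈ switchingPolytope d |
      dist (modulationIndex (fun t => Real.cos (2 * π * t)) α) m ≤ 2 * deltaM d k} := by
  rw [relaxedSet_eq_sep_dist_le]
  rintro α ⟨hα, hm⟩
  refine ⟨hα, (dist_triangle _ (modulationIndex (taylorCos k (1 / 8)) α) _).trans ?_⟩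
  rw [two_mul (deltaM d k)]
  exact add_le_add (dist_modulationIndex_cos_taylorCos_le k hα) hm

end FeasibleSets

theorem relaxed_inf_tendsto_exact_inf_general {R : Type*} [ConditionallyCompleteLinearOrder R]
    [DenselyOrdered R] [TopologicalSpace R] [OrderTopology R] {d : ℕ} {m : ℝ}
    {J : (Fin d → ℝ) → R} (hJ : LowerSemicontinuousOn J (switchingPolytope d))
    (hne : (exactSet d m).Nonempty) :
    Tendsto (fun k => sInf (J '' relaxedSet d m k)) atTop (𝓝 (sInf (J '' exactSet d m))) := by
  have hg : Continuous (modulationIndex (d := d) fun t => Real.cos (2 * π * t)) :=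
    continuous_modulationIndex (by fun_prop)
  have hε : Tendsto (fun k => 2 * deltaM d k) atTop (𝓝 0) := by
    simpa only [mul_zero] using (tendsto_deltaM_atTop d).const_mul 2
  have hsub : ∀ k, exactSet d m ⊆ relaxedSet d m k := exactSet_subset_relaxedSet d m
  rw [exactSet_eq_inter_preimage] at hne hsub ⊢
  exact tendsto_sInf_image_of_subset_dist_le (isCompact_switchingPolytope d) hg.continuousOn hJ hε
    hne (Eventually.of_forall hsub) (Eventually.of_forall (relaxedSet_subset_dist_le d m))

/-- Let d ≥ 1, m ∈ ℝ, and J : ℝ^d → ℝ continuous. If the exact feasible set S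
is nonempty, then the optimal values of the level-k Taylor relaxations converge to the
optimal value of the exact problem: lim_{k→∞} inf_{α ∈ S_k} J(α) = inf_{α ∈ S} J(α). -/
theorem relaxed_inf_tendsto_exact_inf (d : ℕ) (hd : 1 ≤ d) (m : ℝ)
    (J : (Fin d → ℝ) → ℝ) (hJ : Continuous J) (hne : (exactSet d m).Nonempty) :
    Filter.Tendsto (fun k : ℕ => sInf (J '' relaxedSet d m k)) Filter.atTop
      (nhds (sInf (J '' exactSet d m))) :=
  relaxed_inf_tendsto_exact_inf_general (hJ.lowerSemicontinuous.lowerSemicontinuousOn _) hne
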